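/- arXiv:2505.03959 — 2 statements merged into one kernel-verified Lean document; each statement's English description precedes it below -/
import Mathlib

section
/- A bipartite graph G = (A, B, E) has an A-partitioning cover of cost at most k if and only if there exists a sequence of at most k edge editions and vertex splittings, with vertex splittings applied only to vertices of B (and their copies), transforming G into a disjoint union of bicliques. -/
/- Common framework: bipartite graphs on vertex set `ℕ` with side labels,
   edge editions, vertex splittings, and the bicluster-editing numbers. -/

namespace BCE

/-- A graph on a finite subset of `ℕ` equipped with a labelling of its
vertices into two sides `A` and `B`. -/
structure BGraph where
  A : Set ℕ
  B : Set ℕ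
  finA : A.Finite
  finB : B.Finite
  Adj : ℕ → ℕ → Prop
  symm : ∀ u v, Adj u v → Adj v u

/-- The vertex set of a graph. -/
def verts (G : BGraph) : Set ℕ := G.A ∪ G.B

/-- The open neighbourhood of a vertex. -/
def nbhd (G : BGraph) (v : ℕ) : Set ℕ := {u | G.Adj v u}

/-- `G = (A, B, E)` is bipartite: the sides are disjoint and every edge joins
a vertex of `A` with a vertex of `B`. -/
def Bipartite (G : BGraph) : Prop :=
  Disjoint G.A G.B ∧
    ∀ u v, G.Adj u v → (u ∈ G.A ∧ v ∈ G.B) ∨ (u ∈ G.B ∧ v ∈ G.A)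

/-- A (bipartite) graph is a disjoint union of bicliques iff whenever
`a-b-c-d` is a walk, `a` and `d` are adjacent (equivalently, every connected
component is a complete bipartite graph). -/
def IsBicliqueUnion (G : BGraph) : Prop :=
  ∀ a b c d, G.Adj a b → G.Adj b c → G.Adj c d → G.Adj a d

/-- The editing operations: deletion of an edge, addition of an edge, and
splitting of a vertex `v` into `v` and a fresh vertex `v'` whose
neighbourhoods `N1`, `N2` cover the neighbourhood of `v`. -/
inductive Op where
  | del : ℕ → ℕ → Op
  | add : ℕ → ℕ → Op
  | split : ℕ → ℕ → Set ℕ → Set ℕ → Op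

/-- `op` is a vertex splitting. -/
def IsSplitOp : Op → Prop
  | Op.split _ _ _ _ => True
  | _ => False

/-- `OpStep sA sB op G G'` : performing the single operation `op` on `G`
yields `G'`; vertex splittings are allowed on side `A` (resp. `B`) only if
`sA` (resp. `sB`) is `true`.  A copy created by a splitting is put on the
same side as the split vertex. -/
inductive OpStep (sA sB : Bool) : Op → BGraph → BGraph → Prop where
  | del {G G' : BGraph} {u v : ℕ}
      (h : G.Adj u v) (hA : G'.A = G.A) (hB : G'.B = G.B)
      (hadj : ∀ x y, G'.Adj x y ↔
        (G.Adj x y ∧ ¬((x = u ∧ y = v) ∨ (x = v ∧ y = u)))) :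
      OpStep sA sB (Op.del u v) G G'
  | add {G G' : BGraph} {u v : ℕ}
      (hu : u ∈ G.A) (hv : v ∈ G.B) (h : ¬ G.Adj u v)
      (hA : G'.A = G.A) (hB : G'.B = G.B)
      (hadj : ∀ x y, G'.Adj x y ↔
        (G.Adj x y ∨ (x = u ∧ y = v) ∨ (x = v ∧ y = u))) :
      OpStep sA sB (Op.add u v) G G'
  | split {G G' : BGraph} {v v' : ℕ} {N1 N2 : Set ℕ}
      (hside : (v ∈ G.A ∧ sA = true) ∨ (v ∈ G.B ∧ sB = true))
      (hfresh : v' ∉ verts G)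
      (hcover : N1 ∪ N2 = nbhd G v)
      (hA : v ∈ G.A → G'.A = insert v' G.A ∧ G'.B = G.B)
      (hB : v ∈ G.B → G'.A = G.A ∧ G'.B = insert v' G.B)
      (hadj : ∀ x y, G'.Adj x y ↔
        ((G.Adj x y ∧ x ≠ v ∧ y ≠ v) ∨ (x = v ∧ y ∈ N1) ∨ (y = v ∧ x ∈ N1) ∨
          (x = v' ∧ y ∈ N2) ∨ (y = v' ∧ x ∈ N2))) :
      OpStep sA sB (Op.split v v' N1 N2) G G'

/-- `ApplySeq sA sB L G G'` : applying the sequence of operations `L`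
to `G` yields `G'`. -/
def ApplySeq (sA sB : Bool) : List Op → BGraph → BGraph → Prop
  | [], G, G' => G' = G
  | op :: L, G, G'' => ∃ G', OpStep sA sB op G G' ∧ ApplySeq sA sB L G' G''

/-- The sequence `L` transforms `G` into a disjoint union of bicliques. -/
def Solves (sA sB : Bool) (L : List Op) (G : BGraph) : Prop :=
  ∃ G', ApplySeq sA sB L G G' ∧ IsBicliqueUnion G'

/-- `bcevs G` : the minimum length of a sequence of edge editions and vertex
splittings transforming `G` into a disjoint union of bicliques. -/
noncomputable def bcevs (G : BGraph) : ℕ :=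
  sInf {n | ∃ L, L.length = n ∧ Solves true true L G}

/-- `bceovs G` (that is, `bceovs(G, A)`) : the minimum length of such a
sequence in which vertex splittings are applied only to vertices of the side
`A` (and their copies, which are also on side `A`). -/
noncomputable def bceovs (G : BGraph) : ℕ :=
  sInf {n | ∃ L, L.length = n ∧ Solves true false L G}

/-- The subgraph of `G` induced by `S`. -/
def induce (G : BGraph) (S : Set ℕ) : BGraph where
  A := G.A ∩ S
  B := G.B ∩ S
  finA := G.finA.subset Set.inter_subset_left
  finB := G.finB.subset Set.inter_subset_left
  Adj := fun u v => G.Adj u v ∧ u ∈ S ∧ v ∈ S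
  symm := fun u v h => ⟨G.symm u v h.1, h.2.2, h.2.1⟩

/-- `G` is a tree (as an abstract graph on its vertex set). -/
def IsTreeB (G : BGraph) : Prop :=
  (SimpleGraph.induce (verts G) (SimpleGraph.fromRel G.Adj)).IsTree

/-- `G` is connected. -/
def ConnectedB (G : BGraph) : Prop :=
  (SimpleGraph.induce (verts G) (SimpleGraph.fromRel G.Adj)).Connected

/-- The set `S` induces a biclique in `G`: every vertex of `S` on side `A` is
adjacent to every vertex of `S` on side `B`. -/
def IsBicliqueOn (G : BGraph) (S : Set ℕ) : Prop :=
  ∀ u ∈ S ∩ G.A, ∀ v ∈ S ∩ G.B, G.Adj u v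

/-- The set `S` induces a star in `G`: some centre `c ∈ S` is adjacent to all
other vertices of `S`, and every edge inside `S` uses the centre. -/
def IsStarOn (G : BGraph) (S : Set ℕ) : Prop :=
  ∃ c ∈ S, (∀ v ∈ S, v ≠ c → G.Adj c v) ∧
    (∀ u ∈ S, ∀ v ∈ S, G.Adj u v → u = c ∨ v = c)

/-- An `A`-partitioning cover of `G`: a collection of subsets of `A ∪ B`
covering all vertices whose traces on `A` form a partition of `A` (every
vertex of `A` lies in a unique member of the collection). -/
def IsAPartCover (G : BGraph) (C : Set (Set ℕ)) : Prop :=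
  (∀ X ∈ C, X ⊆ verts G) ∧
  (∀ v ∈ verts G, ∃ X ∈ C, v ∈ X) ∧
  (∀ a ∈ G.A, ∃! X, X ∈ C ∧ a ∈ X)

/-- The cost of an `A`-partitioning cover: each `a ∈ A` lying in the unique
set `X ∈ C` costs `|(B ∩ X) \ N(a)| + |N(a) \ X|`; each `b ∈ B` lying in `j`
members of `C` costs `j - 1`. -/
noncomputable def coverCost (G : BGraph) (C : Set (Set ℕ)) : ℕ :=
  (∑ᶠ a ∈ G.A, ∑ᶠ X ∈ {X ∈ C | a ∈ X},
      (((G.B ∩ X) \ nbhd G a).ncard + ((nbhd G a) \ X).ncard)) +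
  ∑ᶠ b ∈ G.B, ({X ∈ C | b ∈ X}.ncard - 1)

/-- The twin class of a vertex: all vertices of `G` with the same open
neighbourhood. -/
def twinClass (G : BGraph) (v : ℕ) : Set ℕ :=
  {u ∈ verts G | nbhd G u = nbhd G v}

/-- The twin classes of `G`. -/
def twinClasses (G : BGraph) : Set (Set ℕ) :=
  {T | ∃ v ∈ verts G, T = twinClass G v}

/-- A cover is twin-adapted if every member contains each twin class either
entirely or not at all. -/
def TwinAdapted (G : BGraph) (C : Set (Set ℕ)) : Prop :=
  ∀ T ∈ twinClasses G, ∀ X ∈ C, T ∩ X = ∅ ∨ T ⊆ X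

/-- `G` is a cycle with consecutive vertices `p 0, p 1, …, p (m-1)`
(indices modulo `m`), the vertices of even index forming side `A`. -/
def IsCycleWith (G : BGraph) (p : ℕ → ℕ) (m : ℕ) : Prop :=
  (∀ i j, i < m → j < m → p i = p j → i = j) ∧
  G.A = p '' {i | i < m ∧ i % 2 = 0} ∧
  G.B = p '' {i | i < m ∧ i % 2 = 1} ∧
  (∀ x y, G.Adj x y ↔ ∃ i < m,
    (x = p i ∧ y = p ((i + 1) % m)) ∨ (y = p i ∧ x = p ((i + 1) % m)))

/-- `G` is a path with `l` edges and consecutive vertices `p 0, …, p l`,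
the vertices of even index forming side `A`. -/
def IsPathWith (G : BGraph) (p : ℕ → ℕ) (l : ℕ) : Prop :=
  (∀ i j, i ≤ l → j ≤ l → p i = p j → i = j) ∧
  G.A = p '' {i | i ≤ l ∧ i % 2 = 0} ∧
  G.B = p '' {i | i ≤ l ∧ i % 2 = 1} ∧
  (∀ x y, G.Adj x y ↔ ∃ i < l,
    (x = p i ∧ y = p (i + 1)) ∨ (y = p i ∧ x = p (i + 1)))

end BCE

/-!
Counting triples `(a, X, b)` on which adjacency of `a` and `b` disagrees with membership of `b` in
the block `X` of `a`, and pairs `(b, X)` with `b ∈ X`, the cost of a cover is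
`#mismatches + #incidences - |B|`.

Flipping an edge changes the set of mismatches in one triple and leaves the incidences alone.
Splitting a vertex of `B` is undone by a map identifying the two copies, and is performed on the
cover by renaming the split vertex inside a single block. Both are relabellings of blocks, and
relabelling creates neither mismatches nor incidences, so only the change of `|B|` by one matters.
Hence an operation lowers the minimum cost by at most one, and some operation does lower a positive
cost. Finally, the graphs having a cover of cost zero are exactly the disjoint unions of bicliques,
the cover being given by the connected components.
-/

namespace BCE

attribute [ext] BGraph

section Bipartite

variable {G : BGraph}

theorem verts_finite (G : BGraph) : (verts G).Finite := G.finA.union G.finB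

theorem Bipartite.notMem_B (hG : Bipartite G) {a : ℕ} (ha : a ∈ G.A) : a ∉ G.B :=
  Set.disjoint_left.1 hG.1 ha

theorem Bipartite.ne (hG : Bipartite G) {a b : ℕ} (ha : a ∈ G.A) (hb : b ∈ G.B) : a ≠ b :=
  hG.1.ne_of_mem ha hb

theorem Bipartite.mem_B_of_adj (hG : Bipartite G) {a b : ℕ} (ha : a ∈ G.A) (h : G.Adj a b) :
    b ∈ G.B :=
  (hG.2 a b h).elim And.right fun h' => (hG.notMem_B ha h'.1).elim

theorem Bipartite.mem_A_of_adj (hG : Bipartite G) {a b : ℕ} (hb : b ∈ G.B) (h : G.Adj b a) :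
    a ∈ G.A :=
  (hG.2 b a h).elim (fun h' => (hG.notMem_B h'.1 hb).elim) And.right

end Bipartite

section Operations

variable {G G' : BGraph}

/-- The graph obtained from `G` by flipping the adjacency of `a` and `b`: the common form of the
two edge editions. -/
@[simps A B]
def toggle (G : BGraph) (a b : ℕ) : BGraph where
  A := G.A
  B := G.B
  finA := G.finA
  finB := G.finB
  Adj x y := Xor (G.Adj x y) (x = a ∧ y = b ∨ x = b ∧ y = a)
  symm x y h := by
    rwa [show G.Adj y x ↔ G.Adj x y from ⟨G.symm y x, G.symm x y⟩,
      show (y = a ∧ x = b ∨ y = b ∧ x = a) ↔ (x = a ∧ y = b ∨ x = b ∧ y = a) by tauto]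

/-- The result of splitting the vertex `b` of the side `B` into `b` and `b'`, with respective
neighbourhoods `N₁` and `N₂`. -/
def splitB (G : BGraph) (b b' : ℕ) (N₁ N₂ : Set ℕ) : BGraph where
  A := G.A
  B := insert b' G.B
  finA := G.finA
  finB := G.finB.insert b'
  Adj x y :=
    (G.Adj x y ∧ x ≠ b ∧ y ≠ b) ∨ (x = b ∧ y ∈ N₁) ∨ (y = b ∧ x ∈ N₁) ∨
      (x = b' ∧ y ∈ N₂) ∨ (y = b' ∧ x ∈ N₂)
  symm x y h := by
    have := G.symm x y
    tauto

theorem toggle_comm (G : BGraph) (a b : ℕ) : toggle G a b = toggle G b a := by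
  simp only [toggle, or_comm]

theorem toggle_adj_of_adj {a b : ℕ} (h : G.Adj a b) (x y : ℕ) :
    (toggle G a b).Adj x y ↔ G.Adj x y ∧ ¬(x = a ∧ y = b ∨ x = b ∧ y = a) := by
  have : x = a ∧ y = b ∨ x = b ∧ y = a → G.Adj x y := by
    rintro (⟨rfl, rfl⟩ | ⟨rfl, rfl⟩)
    exacts [h, G.symm _ _ h]
  simp only [toggle, Xor]
  tauto

theorem toggle_adj_of_not_adj {a b : ℕ} (h : ¬ G.Adj a b) (x y : ℕ) :
    (toggle G a b).Adj x y ↔ G.Adj x y ∨ x = a ∧ y = b ∨ x = b ∧ y = a := by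
  have : x = a ∧ y = b ∨ x = b ∧ y = a → ¬ G.Adj x y := by
    rintro (⟨rfl, rfl⟩ | ⟨rfl, rfl⟩)
    exacts [h, fun h' => h (G.symm _ _ h')]
  simp only [toggle, Xor]
  tauto

theorem exists_opStep_toggle (sA sB : Bool) {a b : ℕ} (ha : a ∈ G.A) (hb : b ∈ G.B) :
    ∃ op, OpStep sA sB op G (toggle G a b) := by
  by_cases h : G.Adj a b
  · exact ⟨_, .del h rfl rfl (toggle_adj_of_adj h)⟩
  · exact ⟨_, .add ha hb h rfl rfl (toggle_adj_of_not_adj h)⟩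

theorem opStep_splitB (sA : Bool) (hG : Bipartite G) {b b' : ℕ} {N₁ N₂ : Set ℕ} (hb : b ∈ G.B)
    (hb' : b' ∉ verts G) (hN : N₁ ∪ N₂ = nbhd G b) :
    OpStep sA true (.split b b' N₁ N₂) G (splitB G b b' N₁ N₂) :=
  .split (.inr ⟨hb, rfl⟩) hb' hN (fun h => (hG.notMem_B h hb).elim) (fun _ => ⟨rfl, rfl⟩)
    fun _ _ => Iff.rfl

theorem OpStep.eq_toggle_or_eq_splitB {op : Op} (hG : Bipartite G)
    (h : OpStep false true op G G') :
    (∃ a ∈ G.A, ∃ b ∈ G.B, G' = toggle G a b) ∨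
      ∃ b ∈ G.B, ∃ b' ∉ verts G, ∃ N₁ N₂, N₁ ∪ N₂ = nbhd G b ∧ G' = splitB G b b' N₁ N₂ := by
  cases h with
  | @del _ _ u v h hA hB hadj =>
    have heq : G' = toggle G u v :=
      BGraph.ext hA hB (by ext x y; rw [hadj, toggle_adj_of_adj h])
    rcases hG.2 u v h with ⟨hu, hv⟩ | ⟨hu, hv⟩
    · exact .inl ⟨u, hu, v, hv, heq⟩
    · exact .inl ⟨v, hv, u, hu, heq.trans (toggle_comm G u v)⟩
  | @add _ _ u v hu hv h hA hB hadj =>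
    exact .inl ⟨u, hu, v, hv,
      BGraph.ext hA hB (by ext x y; rw [hadj, toggle_adj_of_not_adj h])⟩
  | @split _ _ b b' N₁ N₂ hside hfresh hcover _ hB hadj =>
    have hb : b ∈ G.B := by simpa using hside
    obtain ⟨hA', hB'⟩ := hB hb
    exact .inr ⟨b, hb, b', hfresh, N₁, N₂, hcover, BGraph.ext hA' hB' (by ext x y; exact hadj x y)⟩

theorem Bipartite.toggle (hG : Bipartite G) {a b : ℕ} (ha : a ∈ G.A) (hb : b ∈ G.B) :
    Bipartite (toggle G a b) := by
  refine ⟨hG.1, fun x y h => ?_⟩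
  rcases Xor.or h with h | ⟨rfl, rfl⟩ | ⟨rfl, rfl⟩
  exacts [hG.2 x y h, .inl ⟨ha, hb⟩, .inr ⟨hb, ha⟩]

theorem Bipartite.splitB (hG : Bipartite G) {b b' : ℕ} {N₁ N₂ : Set ℕ} (hb : b ∈ G.B)
    (hb' : b' ∉ verts G) (hN : N₁ ∪ N₂ = nbhd G b) : Bipartite (splitB G b b' N₁ N₂) := by
  have hN₁ : N₁ ⊆ G.A := fun y hy => hG.mem_A_of_adj hb (hN.subset (.inl hy))
  have hN₂ : N₂ ⊆ G.A := fun y hy => hG.mem_A_of_adj hb (hN.subset (.inr hy))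
  refine ⟨Set.disjoint_insert_right.2 ⟨fun h => hb' (.inl h), hG.1⟩, fun x y h => ?_⟩
  rcases h with ⟨h, -⟩ | ⟨rfl, h⟩ | ⟨rfl, h⟩ | ⟨rfl, h⟩ | ⟨rfl, h⟩
  · exact (hG.2 x y h).imp (And.imp_right .inr) (And.imp_left .inr)
  · exact .inr ⟨.inr hb, hN₁ h⟩
  · exact .inl ⟨hN₁ h, .inr hb⟩
  · exact .inr ⟨.inl rfl, hN₂ h⟩
  · exact .inl ⟨hN₂ h, .inl rfl⟩

theorem OpStep.bipartite {op : Op} (hG : Bipartite G) (h : OpStep false true op G G') :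
    Bipartite G' := by
  rcases h.eq_toggle_or_eq_splitB hG with
    ⟨a, ha, b, hb, rfl⟩ | ⟨b, hb, b', hb', N₁, N₂, hN, rfl⟩
  exacts [hG.toggle ha hb, hG.splitB hb hb' hN]

theorem toggle_adj_of_mem (hG : Bipartite G) {a b x y : ℕ} (hb : b ∈ G.B) (hx : x ∈ G.A) :
    (toggle G a b).Adj x y ↔ Xor (G.Adj x y) (x = a ∧ y = b) := by
  simp only [toggle, hG.ne hx hb, false_and, or_false]

theorem splitB_adj_of_mem (hG : Bipartite G) {b b' a y : ℕ} {N₁ N₂ : Set ℕ} (hb : b ∈ G.B)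
    (hb' : b' ∉ verts G) (ha : a ∈ G.A) :
    (splitB G b b' N₁ N₂).Adj a y ↔
      (G.Adj a y ∧ y ≠ b) ∨ (y = b ∧ a ∈ N₁) ∨ (y = b' ∧ a ∈ N₂) := by
  have hab' : a ≠ b' := fun h => hb' (.inl (h ▸ ha))
  simp only [splitB, ne_eq, hG.ne ha hb, hab', not_false_eq_true, true_and, false_and, false_or]

theorem ncard_B_splitB {b' : ℕ} (b : ℕ) (N₁ N₂ : Set ℕ) (hb' : b' ∉ verts G) :
    (splitB G b b' N₁ N₂).B.ncard = G.B.ncard + 1 :=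
  Set.ncard_insert_of_notMem (fun h => hb' (.inr h)) G.finB

end Operations

section Cost

theorem ncard_eq_finsum_ncard_preimage_mk {α β : Type*} {s : Set (α × β)} {t : Set α}
    (hs : s.Finite) (ht : t.Finite) (hst : ∀ p ∈ s, p.1 ∈ t) :
    s.ncard = ∑ᶠ a ∈ t, (Prod.mk a ⁻¹' s).ncard := by
  have hfibers : s = ⋃ a ∈ t, Prod.mk a '' (Prod.mk a ⁻¹' s) := by
    ext ⟨a, b⟩
    simpa using hst (a, b)
  conv_lhs => rw [hfibers]
  rw [ht.ncard_biUnion (fun a _ => (hs.preimage (Prod.mk_right_injective a).injOn).image _)]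
  · exact finsum_mem_congr rfl fun a _ => Set.ncard_image_of_injective _ (Prod.mk_right_injective a)
  · rintro a - a' - haa'
    refine Set.disjoint_left.2 ?_
    rintro _ ⟨b, -, rfl⟩ ⟨b', -, h⟩
    exact haa' (Prod.mk.inj h).1.symm

/-- The disagreements between a graph and a cover: triples `(a, X, b)` such that `a ∈ A` lies in
the block `X` and `b ∈ B` violates the rule that the neighbours of `a` are the members of `X`. -/
def mismatches (G : BGraph) (C : Set (Set ℕ)) : Set (ℕ × Set ℕ × ℕ) :=
  {(a, X, b) : ℕ × Set ℕ × ℕ | a ∈ G.A ∧ X ∈ C ∧ a ∈ X ∧ b ∈ G.B ∧ ¬(G.Adj a b ↔ b ∈ X)}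

/-- The pairs `(b, X)` of a vertex of `B` and a member of the collection `C` containing it. -/
def incidences (G : BGraph) (C : Set (Set ℕ)) : Set (ℕ × Set ℕ) :=
  {(b, X) : ℕ × Set ℕ | b ∈ G.B ∧ X ∈ C ∧ b ∈ X}

variable {G : BGraph} {C : Set (Set ℕ)}

theorem mismatches_finite (G : BGraph) (hC : C.Finite) : (mismatches G C).Finite :=
  (G.finA.prod (hC.prod G.finB)).subset fun _ h => ⟨h.1, h.2.1, h.2.2.2.1⟩

theorem incidences_finite (G : BGraph) (hC : C.Finite) : (incidences G C).Finite :=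
  (G.finB.prod hC).subset fun _ h => ⟨h.1, h.2.1⟩

theorem IsAPartCover.finite (hC : IsAPartCover G C) : C.Finite :=
  (verts_finite G).finite_subsets.subset hC.1

theorem ncard_mismatches (hG : Bipartite G) (hC : C.Finite) :
    (mismatches G C).ncard = ∑ᶠ a ∈ G.A, ∑ᶠ X ∈ {X ∈ C | a ∈ X},
      (((G.B ∩ X) \ nbhd G a).ncard + (nbhd G a \ X).ncard) := by
  have hfin := mismatches_finite G hC
  rw [ncard_eq_finsum_ncard_preimage_mk hfin G.finA fun _ h => h.1]
  refine finsum_mem_congr rfl fun a ha => ?_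
  rw [ncard_eq_finsum_ncard_preimage_mk (t := {X ∈ C | a ∈ X})
    (hfin.preimage (Prod.mk_right_injective a).injOn) (hC.subset (Set.sep_subset C _))
    fun _ h => ⟨h.2.1, h.2.2.1⟩]
  refine finsum_mem_congr rfl fun X hX => ?_
  have hN : nbhd G a ⊆ G.B := fun y hy => hG.mem_B_of_adj ha hy
  rw [← Set.ncard_union_eq (Set.disjoint_left.2 fun y h h' => h'.2 h.1.2)
    (G.finB.subset fun y h => h.1.1) (G.finB.subset fun y h => hN h.1)]
  congr 1
  ext y
  have hy : y ∈ nbhd G a → y ∈ G.B := @hN y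
  change (a ∈ G.A ∧ X ∈ C ∧ a ∈ X ∧ y ∈ G.B ∧ ¬(y ∈ nbhd G a ↔ y ∈ X)) ↔ _
  simp only [ha, hX.1, hX.2, true_and, Set.mem_union, Set.mem_sdiff, Set.mem_inter_iff]
  tauto

theorem IsAPartCover.ncard_incidences (hC : IsAPartCover G C) :
    (incidences G C).ncard = ∑ᶠ b ∈ G.B, ({X ∈ C | b ∈ X}.ncard - 1) + G.B.ncard := by
  rw [ncard_eq_finsum_ncard_preimage_mk (incidences_finite G hC.finite) G.finB fun _ h => h.1,
    ← finsum_one, ← finsum_mem_add_distrib G.finB]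
  refine finsum_mem_congr rfl fun b hb => ?_
  have hpos : 0 < {X ∈ C | b ∈ X}.ncard :=
    (Set.ncard_pos (hC.finite.subset (Set.sep_subset C _))).2 (hC.2.1 b (.inr hb))
  rw [Nat.sub_add_cancel hpos]
  congr 1
  ext X
  exact and_iff_right hb

theorem IsAPartCover.coverCost_add_ncard (hG : Bipartite G) (hC : IsAPartCover G C) :
    coverCost G C + G.B.ncard = (mismatches G C).ncard + (incidences G C).ncard := by
  rw [coverCost, ncard_mismatches hG hC.finite, hC.ncard_incidences, add_assoc]

end Cost

section Toggle

variable {G : BGraph} {C : Set (Set ℕ)} {a b : ℕ} {X : Set ℕ}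

theorem isAPartCover_toggle : IsAPartCover (toggle G a b) C ↔ IsAPartCover G C := Iff.rfl

theorem IsAPartCover.mismatches_toggle (hG : Bipartite G) (hC : IsAPartCover G C) (ha : a ∈ G.A)
    (hb : b ∈ G.B) (hX : X ∈ C) (haX : a ∈ X) :
    mismatches (toggle G a b) C = symmDiff (mismatches G C) {(a, X, b)} := by
  ext ⟨x, Y, y⟩
  by_cases hxy : x = a ∧ y = b
  · obtain ⟨rfl, rfl⟩ := hxy
    have hY : Y ∈ C → x ∈ Y → Y = X := fun hY hxY =>
      (hC.2.2 x ha).unique ⟨hY, hxY⟩ ⟨hX, haX⟩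
    have hflip : (toggle G x y).Adj x y ↔ ¬ G.Adj x y := by
      simp [toggle_adj_of_mem hG hb ha, Xor]
    simp only [mismatches, Set.mem_symmDiff, Set.mem_ofPred_eq, Set.mem_singleton_iff,
      Prod.mk.injEq, toggle_A, toggle_B, hflip]
    grind
  · have hsame : x ∈ G.A → ((toggle G a b).Adj x y ↔ G.Adj x y) := fun hx => by
      simp [toggle_adj_of_mem hG hb hx, hxy, Xor]
    simp only [mismatches, Set.mem_symmDiff, Set.mem_ofPred_eq, Set.mem_singleton_iff,
      Prod.mk.injEq, toggle_A, toggle_B]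
    grind

theorem IsAPartCover.coverCost_toggle_add_ncard (hG : Bipartite G) (hC : IsAPartCover G C)
    (ha : a ∈ G.A) (hb : b ∈ G.B) :
    coverCost (toggle G a b) C + (mismatches G C).ncard =
      coverCost G C + (mismatches (toggle G a b) C).ncard := by
  have hcost := hC.coverCost_add_ncard hG
  have hcost' := (isAPartCover_toggle.2 hC).coverCost_add_ncard (hG.toggle ha hb)
  have hinc : incidences (toggle G a b) C = incidences G C := rfl
  rw [hinc, toggle_B] at hcost'
  lia

theorem IsAPartCover.coverCost_le_coverCost_toggle_add_one (hG : Bipartite G)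
    (hC : IsAPartCover G C) (ha : a ∈ G.A) (hb : b ∈ G.B) :
    coverCost G C ≤ coverCost (toggle G a b) C + 1 := by
  obtain ⟨X, ⟨hX, haX⟩, -⟩ := hC.2.2 a ha
  have hsub : mismatches G C ⊆ insert (a, X, b) (mismatches (toggle G a b) C) := by
    rw [hC.mismatches_toggle hG ha hb hX haX]
    intro p hp
    by_cases h : p = (a, X, b)
    exacts [.inl h, .inr (.inl ⟨hp, h⟩)]
  have hle := (Set.ncard_le_ncard hsub ((mismatches_finite _ hC.finite).insert _)).trans
    (Set.ncard_insert_le _ _)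
  have hcost := hC.coverCost_toggle_add_ncard hG ha hb
  lia

theorem IsAPartCover.coverCost_toggle_lt (hG : Bipartite G) (hC : IsAPartCover G C)
    (h : (a, X, b) ∈ mismatches G C) : coverCost (toggle G a b) C < coverCost G C := by
  obtain ⟨ha, hX, haX, hb, -⟩ := id h
  have hlt : (mismatches (toggle G a b) C).ncard < (mismatches G C).ncard := by
    rw [hC.mismatches_toggle hG ha hb hX haX, symmDiff_of_ge (Set.singleton_subset_iff.2 h)]
    exact Set.ncard_sdiff_singleton_lt_of_mem h (mismatches_finite G hC.finite)
  have hcost := hC.coverCost_toggle_add_ncard hG ha hb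
  lia

end Toggle

section Relabelling

/-- The collection obtained from `C` by applying the map `f X` to the vertices of each member
`X`. -/
def relabel (f : Set ℕ → ℕ → ℕ) (C : Set (Set ℕ)) : Set (Set ℕ) := (fun X => f X '' X) '' C

/-- Renaming the vertices of `B` by `f X` inside each block `X` of the cover `C` of `G` turns the
neighbours of a vertex of `A` into its neighbours in `G'`. This covers both the identification of
two vertices of `B`, where `f X` does not depend on `X`, and the splitting of a vertex, where `f X`
is the identity for all but one `X`. -/
structure IsRelabelling (f : Set ℕ → ℕ → ℕ) (C : Set (Set ℕ)) (G G' : BGraph) : Prop where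
  A_eq : G'.A = G.A
  apply_of_mem_A : ∀ X ∈ C, ∀ a ∈ G.A, f X a = a
  mapsTo_B : ∀ X ∈ C, Set.MapsTo (f X) G.B G'.B
  exists_apply_eq : ∀ y ∈ G'.B, ∃ X ∈ C, ∃ x ∈ X, f X x = y
  adj_iff : ∀ X ∈ C, ∀ a ∈ G.A, a ∈ X → ∀ y ∈ G'.B, (G'.Adj a y ↔ ∃ x, G.Adj a x ∧ f X x = y)

variable {f : Set ℕ → ℕ → ℕ} {C : Set (Set ℕ)} {G G' : BGraph} {X : Set ℕ}

namespace IsRelabelling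

theorem mem_B_of_apply_mem_B (h : IsRelabelling f C G G') (hG' : Bipartite G')
    (hC : IsAPartCover G C) (hX : X ∈ C) {x : ℕ} (hx : x ∈ X) (hfx : f X x ∈ G'.B) : x ∈ G.B := by
  refine (hC.1 X hX hx).resolve_left fun hxA => ?_
  rw [h.apply_of_mem_A X hX x hxA] at hfx
  exact hG'.notMem_B (h.A_eq ▸ hxA) hfx

theorem mem_image_iff (h : IsRelabelling f C G G') (hG' : Bipartite G') (hC : IsAPartCover G C)
    (hX : X ∈ C) {a : ℕ} (ha : a ∈ G.A) : a ∈ f X '' X ↔ a ∈ X := by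
  refine ⟨?_, fun haX => ⟨a, haX, h.apply_of_mem_A X hX a ha⟩⟩
  rintro ⟨x, hx, rfl⟩
  rcases hC.1 X hX hx with hxA | hxB
  · rwa [h.apply_of_mem_A X hX x hxA]
  · exact (hG'.notMem_B (h.A_eq ▸ ha) (h.mapsTo_B X hX hxB)).elim

theorem isAPartCover (h : IsRelabelling f C G G') (hG' : Bipartite G') (hC : IsAPartCover G C) :
    IsAPartCover G' (relabel f C) := by
  refine ⟨?_, ?_, ?_⟩
  · rintro _ ⟨X, hX, rfl⟩ _ ⟨x, hx, rfl⟩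
    rcases hC.1 X hX hx with hxA | hxB
    · rw [h.apply_of_mem_A X hX x hxA]
      exact .inl (h.A_eq ▸ hxA)
    · exact .inr (h.mapsTo_B X hX hxB)
  · rintro y (hy | hy)
    · rw [h.A_eq] at hy
      obtain ⟨X, hX, hyX⟩ := hC.2.1 y (.inl hy)
      exact ⟨f X '' X, ⟨X, hX, rfl⟩, (h.mem_image_iff hG' hC hX hy).2 hyX⟩
    · obtain ⟨X, hX, hyX⟩ := h.exists_apply_eq y hy
      exact ⟨f X '' X, ⟨X, hX, rfl⟩, hyX⟩
  · intro a ha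
    rw [h.A_eq] at ha
    obtain ⟨X, ⟨hX, haX⟩, huniq⟩ := hC.2.2 a ha
    refine ⟨f X '' X, ⟨⟨X, hX, rfl⟩, (h.mem_image_iff hG' hC hX ha).2 haX⟩, ?_⟩
    rintro _ ⟨⟨Y, hY, rfl⟩, haY⟩
    rw [huniq Y ⟨hY, (h.mem_image_iff hG' hC hY ha).1 haY⟩]

theorem ncard_mismatches_le (h : IsRelabelling f C G G') (hG : Bipartite G) (hG' : Bipartite G')
    (hC : IsAPartCover G C) : (mismatches G' (relabel f C)).ncard ≤ (mismatches G C).ncard := by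
  have hfin := mismatches_finite G hC.finite
  refine (Set.ncard_le_ncard (t := (fun p => (p.1, f p.2.1 '' p.2.1, f p.2.1 p.2.2)) ''
    mismatches G C) ?_ (hfin.image _)).trans (Set.ncard_image_le hfin)
  rintro ⟨a, _, y⟩ ⟨ha, ⟨X, hX, rfl⟩, haX, hy, hne⟩
  have ha : a ∈ G.A := h.A_eq ▸ ha
  replace haX : a ∈ X := (h.mem_image_iff hG' hC hX ha).1 haX
  obtain ⟨x, hx, rfl, hax⟩ : ∃ x ∈ G.B, f X x = y ∧ ¬(G.Adj a x ↔ x ∈ X) := by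
    by_contra! hall
    refine hne ((h.adj_iff X hX a ha haX y hy).trans (exists_congr fun x => ?_))
    refine and_congr_left fun hxy => ⟨fun hax => ?_, fun hxX => ?_⟩
    · exact (hall x (hG.mem_B_of_adj ha hax) hxy).1 hax
    · exact (hall x (h.mem_B_of_apply_mem_B hG' hC hX hxX (hxy ▸ hy)) hxy).2 hxX
  exact ⟨(a, X, x), ⟨ha, hX, haX, hx, hax⟩, rfl⟩

theorem ncard_incidences_le (h : IsRelabelling f C G G') (hG' : Bipartite G')
    (hC : IsAPartCover G C) : (incidences G' (relabel f C)).ncard ≤ (incidences G C).ncard := by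
  have hfin := incidences_finite G hC.finite
  refine (Set.ncard_le_ncard (t := (fun p => (f p.2 p.1, f p.2 '' p.2)) '' incidences G C) ?_
    (hfin.image _)).trans (Set.ncard_image_le hfin)
  rintro ⟨_, _⟩ ⟨hy, ⟨X, hX, rfl⟩, x, hx, rfl⟩
  exact ⟨(x, X), ⟨h.mem_B_of_apply_mem_B hG' hC hX hx hy, hX, hx⟩, rfl⟩

theorem coverCost_add_ncard_le (h : IsRelabelling f C G G') (hG : Bipartite G)
    (hG' : Bipartite G') (hC : IsAPartCover G C) :
    coverCost G' (relabel f C) + G'.B.ncard ≤ coverCost G C + G.B.ncard := by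
  rw [(h.isAPartCover hG' hC).coverCost_add_ncard hG', hC.coverCost_add_ncard hG]
  exact add_le_add (h.ncard_mismatches_le hG hG' hC) (h.ncard_incidences_le hG' hC)

end IsRelabelling

end Relabelling

section Split

variable {G : BGraph} {C : Set (Set ℕ)} {b b' : ℕ} {N₁ N₂ S T : Set ℕ}

theorem isRelabelling_of_splitB (hG : Bipartite G) (hb : b ∈ G.B) (hb' : b' ∉ verts G)
    (hN : N₁ ∪ N₂ = nbhd G b) (hC : IsAPartCover (splitB G b b' N₁ N₂) C) :
    IsRelabelling (fun _ => Function.update id b' b) C (splitB G b b' N₁ N₂) G where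
  A_eq := rfl
  apply_of_mem_A _ _ a ha := Function.update_of_ne (fun h : a = b' => hb' (.inl (h ▸ ha))) _ _
  mapsTo_B _ _ x hx := by
    rcases hx with rfl | hx
    · simpa using hb
    · rwa [Function.update_of_ne (fun h : x = b' => hb' (.inr (h ▸ hx)))]
  exists_apply_eq y hy := by
    obtain ⟨X, hX, hyX⟩ := hC.2.1 y (.inr (.inr hy))
    exact ⟨X, hX, y, hyX, Function.update_of_ne (fun h : y = b' => hb' (.inr (h ▸ hy))) _ _⟩
  adj_iff _ _ a ha _ y hy := by
    have hab : G.Adj a b ↔ a ∈ N₁ ∨ a ∈ N₂ := by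
      rw [← Set.mem_union, hN]
      exact ⟨G.symm a b, G.symm b a⟩
    have hab' : ¬ G.Adj a b' := fun h => hb' (.inr (hG.mem_B_of_adj ha h))
    have hyb' : y ≠ b' := fun h => hb' (.inr (h ▸ hy))
    have hbb' : b ≠ b' := fun h => hb' (.inr (h ▸ hb))
    simp only [splitB_adj_of_mem hG hb hb' ha, Function.update_apply, id_eq]
    grind

theorem exists_coverCost_le_coverCost_splitB_add_one (hG : Bipartite G) (hb : b ∈ G.B)
    (hb' : b' ∉ verts G) (hN : N₁ ∪ N₂ = nbhd G b) (hC : IsAPartCover (splitB G b b' N₁ N₂) C) :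
    ∃ D, IsAPartCover G D ∧ coverCost G D ≤ coverCost (splitB G b b' N₁ N₂) C + 1 := by
  have hmerge := isRelabelling_of_splitB hG hb hb' hN hC
  refine ⟨_, hmerge.isAPartCover hG hC, ?_⟩
  have hcost := hmerge.coverCost_add_ncard_le (hG.splitB hb hb' hN) hG hC
  rw [ncard_B_splitB b N₁ N₂ hb'] at hcost
  lia

open Classical in
theorem isRelabelling_splitB (hG : Bipartite G) (hC : IsAPartCover G C) (hb : b ∈ G.B)
    (hb' : b' ∉ verts G) (hS : S ∈ C) (hT : T ∈ C) (hbS : b ∈ S) (hbT : b ∈ T) (hST : S ≠ T) :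
    IsRelabelling (fun X => if X = S then Function.update id b b' else id) C G
      (splitB G b b' (nbhd G b \ S) (nbhd G b ∩ S)) where
  A_eq := rfl
  apply_of_mem_A X _ a ha := by
    split_ifs
    exacts [Function.update_of_ne (hG.ne ha hb) _ _, rfl]
  mapsTo_B X _ x hx := by
    by_cases hXS : X = S <;> by_cases hxb : x = b <;> simp [splitB, hXS, hxb, hb, hx]
  exists_apply_eq y hy := by
    by_cases hyb' : y = b'
    · exact ⟨S, hS, b, hbS, by simp [hyb']⟩
    by_cases hyb : y = b
    · exact ⟨T, hT, b, hbT, by simp [hST.symm, hyb]⟩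
    obtain ⟨X, hX, hyX⟩ := hC.2.1 y (.inr (hy.resolve_left hyb'))
    exact ⟨X, hX, y, hyX, by split_ifs <;> simp [hyb]⟩
  adj_iff X hX a ha haX y _ := by
    have haS : a ∈ S ↔ X = S :=
      ⟨fun h => (hC.2.2 a ha).unique ⟨hX, haX⟩ ⟨hS, h⟩, fun h => h ▸ haX⟩
    have hab : a ∈ nbhd G b ↔ G.Adj a b := ⟨G.symm b a, G.symm a b⟩
    simp only [splitB_adj_of_mem hG hb hb' ha, Set.mem_sdiff, Set.mem_inter_iff, haS, hab]
    by_cases hXS : X = S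
    · simp only [hXS, if_true, Function.update_apply, id_eq]
      grind
    · simp only [hXS, if_false, id_eq]
      grind

theorem exists_coverCost_splitB_lt (hG : Bipartite G) (hC : IsAPartCover G C) (hb : b ∈ G.B)
    (hb' : b' ∉ verts G) (hS : S ∈ C) (hT : T ∈ C) (hbS : b ∈ S) (hbT : b ∈ T) (hST : S ≠ T) :
    ∃ D, IsAPartCover (splitB G b b' (nbhd G b \ S) (nbhd G b ∩ S)) D ∧
      coverCost (splitB G b b' (nbhd G b \ S) (nbhd G b ∩ S)) D < coverCost G C := by
  have hrename := isRelabelling_splitB hG hC hb hb' hS hT hbS hbT hST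
  have hG' := hG.splitB hb hb' (Set.sdiff_union_inter (nbhd G b) S)
  refine ⟨_, hrename.isAPartCover hG' hC, ?_⟩
  have hcost := hrename.coverCost_add_ncard_le hG hG' hC
  rw [ncard_B_splitB b _ _ hb'] at hcost
  lia

end Split

section Bicliques

variable {G : BGraph} {C : Set (Set ℕ)}

/-- The vertices of the connected component of `v` in `G`. -/
def component (G : BGraph) (v : ℕ) : Set ℕ := {u ∈ verts G | Relation.ReflTransGen G.Adj v u}

theorem mem_component_self {v : ℕ} (hv : v ∈ verts G) : v ∈ component G v :=
  ⟨hv, .refl⟩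

theorem component_eq_of_mem {u v : ℕ} (h : u ∈ component G v) : component G v = component G u := by
  have : Std.Symm G.Adj := ⟨G.symm⟩
  ext w
  exact and_congr_right fun _ => ⟨(symm h.2).trans, h.2.trans⟩

theorem isAPartCover_components (G : BGraph) : IsAPartCover G (component G '' verts G) := by
  refine ⟨?_, fun v hv => ⟨_, ⟨v, hv, rfl⟩, mem_component_self hv⟩,
    fun a ha => ⟨_, ⟨⟨a, .inl ha, rfl⟩, mem_component_self (.inl ha)⟩, ?_⟩⟩
  · rintro _ ⟨v, -, rfl⟩
    exact Set.sep_subset _ _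
  · rintro _ ⟨⟨v, -, rfl⟩, hav⟩
    exact component_eq_of_mem hav

theorem IsBicliqueUnion.eq_or_adj_or_of_reflTransGen (h : IsBicliqueUnion G) {u v : ℕ}
    (huv : Relation.ReflTransGen G.Adj u v) :
    v = u ∨ G.Adj u v ∨ ∃ w, G.Adj u w ∧ G.Adj w v := by
  induction huv with
  | refl => exact .inl rfl
  | tail _ hxy ih =>
    rcases ih with rfl | hux | ⟨w, huw, hwx⟩
    · exact .inr (.inl hxy)
    · exact .inr (.inr ⟨_, hux, hxy⟩)
    · exact .inr (.inl (h _ _ _ _ huw hwx hxy))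

theorem IsBicliqueUnion.adj_iff_reflTransGen (h : IsBicliqueUnion G) (hG : Bipartite G) {a b : ℕ}
    (ha : a ∈ G.A) (hb : b ∈ G.B) : G.Adj a b ↔ Relation.ReflTransGen G.Adj a b := by
  refine ⟨.single, fun hab => ?_⟩
  rcases h.eq_or_adj_or_of_reflTransGen hab with rfl | hab | ⟨w, haw, hwb⟩
  · exact (hG.notMem_B ha hb).elim
  · exact hab
  · exact (hG.notMem_B (hG.mem_A_of_adj (hG.mem_B_of_adj ha haw) hwb) hb).elim

theorem IsBicliqueUnion.mismatches_components (h : IsBicliqueUnion G) (hG : Bipartite G) :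
    mismatches G (component G '' verts G) = ∅ := by
  rw [Set.eq_empty_iff_forall_notMem]
  rintro ⟨a, _, b⟩ ⟨ha, ⟨v, -, rfl⟩, hav, hb, hne⟩
  rw [component_eq_of_mem hav] at hne
  exact hne ((h.adj_iff_reflTransGen hG ha hb).trans (and_iff_right (.inr hb)).symm)

theorem ncard_incidences_components_le (G : BGraph) :
    (incidences G (component G '' verts G)).ncard ≤ G.B.ncard := by
  refine (Set.ncard_le_ncard (t := (fun b => (b, component G b)) '' G.B) ?_
    (G.finB.image _)).trans (Set.ncard_image_le G.finB)
  rintro ⟨b, _⟩ ⟨hb, ⟨v, -, rfl⟩, hbv⟩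
  exact ⟨b, hb, Prod.ext rfl (component_eq_of_mem hbv).symm⟩

theorem IsBicliqueUnion.coverCost_components (h : IsBicliqueUnion G) (hG : Bipartite G) :
    coverCost G (component G '' verts G) = 0 := by
  have hcost := (isAPartCover_components G).coverCost_add_ncard hG
  rw [h.mismatches_components hG, Set.ncard_empty] at hcost
  have := ncard_incidences_components_le G
  lia

theorem isBicliqueUnion_of_mismatches_eq_empty (hG : Bipartite G) (hC : IsAPartCover G C)
    (hmis : mismatches G C = ∅)
    (huniq : ∀ b ∈ G.B, ∀ S ∈ C, ∀ T ∈ C, b ∈ S → b ∈ T → S = T) : IsBicliqueUnion G := by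
  have hadj : ∀ a ∈ G.A, ∀ X ∈ C, a ∈ X → ∀ b ∈ G.B, (G.Adj a b ↔ b ∈ X) := by
    intro a ha X hX haX b hb
    by_contra hne
    exact hmis.subset (show (a, X, b) ∈ mismatches G C from ⟨ha, hX, haX, hb, hne⟩)
  have hwalk : ∀ a b c d, a ∈ G.A → G.Adj a b → G.Adj b c → G.Adj c d → G.Adj a d := by
    intro a b c d ha hab hbc hcd
    have hb := hG.mem_B_of_adj ha hab
    have hc := hG.mem_A_of_adj hb hbc
    have hd := hG.mem_B_of_adj hc hcd
    obtain ⟨X, ⟨hX, haX⟩, -⟩ := hC.2.2 a ha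
    obtain ⟨Y, ⟨hY, hcY⟩, -⟩ := hC.2.2 c hc
    have hbX := (hadj a ha X hX haX b hb).1 hab
    have hbY := (hadj c hc Y hY hcY b hb).1 (G.symm b c hbc)
    obtain rfl := huniq b hb X hX Y hY hbX hbY
    exact (hadj a ha X hX haX d hd).2 ((hadj c hc X hX hcY d hd).1 hcd)
  intro a b c d hab hbc hcd
  rcases hG.2 a b hab with ⟨ha, -⟩ | ⟨-, hb⟩
  · exact hwalk a b c d ha hab hbc hcd
  · have hd := hG.mem_A_of_adj (hG.mem_B_of_adj hb hbc) hcd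
    exact G.symm d a (hwalk d c b a hd (G.symm c d hcd) (G.symm b c hbc) (G.symm a b hab))

end Bicliques

section Sequences

variable {G G' : BGraph} {C : Set (Set ℕ)}

theorem OpStep.exists_coverCost_le_add_one {op : Op} (hG : Bipartite G)
    (h : OpStep false true op G G') (hC : IsAPartCover G' C) :
    ∃ D, IsAPartCover G D ∧ coverCost G D ≤ coverCost G' C + 1 := by
  rcases h.eq_toggle_or_eq_splitB hG with
    ⟨a, ha, b, hb, rfl⟩ | ⟨b, hb, b', hb', N₁, N₂, hN, rfl⟩
  · have hC := isAPartCover_toggle.1 hC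
    exact ⟨C, hC, hC.coverCost_le_coverCost_toggle_add_one hG ha hb⟩
  · exact exists_coverCost_le_coverCost_splitB_add_one hG hb hb' hN hC

theorem Solves.exists_coverCost_le_length {L : List Op} (hG : Bipartite G)
    (h : Solves false true L G) : ∃ C, IsAPartCover G C ∧ coverCost G C ≤ L.length := by
  induction L generalizing G with
  | nil =>
    obtain ⟨_, rfl, hbi⟩ := h
    exact ⟨_, isAPartCover_components _, (hbi.coverCost_components hG).le⟩
  | cons op L ih =>
    obtain ⟨H, ⟨G', hstep, hseq⟩, hH⟩ := h
    obtain ⟨C, hC, hcost⟩ := ih (hstep.bipartite hG) ⟨H, hseq, hH⟩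
    obtain ⟨D, hD, hcost'⟩ := hstep.exists_coverCost_le_add_one hG hC
    exact ⟨D, hD, hcost'.trans (Nat.succ_le_succ hcost)⟩

theorem IsAPartCover.isBicliqueUnion_or_exists_opStep (hG : Bipartite G) (hC : IsAPartCover G C) :
    IsBicliqueUnion G ∨ ∃ op G' D, OpStep false true op G G' ∧ IsAPartCover G' D ∧
      coverCost G' D < coverCost G C := by
  rcases (mismatches G C).eq_empty_or_nonempty with hmis | ⟨⟨a, X, b⟩, hab⟩
  · by_cases huniq : ∀ b ∈ G.B, ∀ S ∈ C, ∀ T ∈ C, b ∈ S → b ∈ T → S = T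
    · exact .inl (isBicliqueUnion_of_mismatches_eq_empty hG hC hmis huniq)
    · push Not at huniq
      obtain ⟨b, hb, S, hS, T, hT, hbS, hbT, hST⟩ := huniq
      obtain ⟨b', hb'⟩ := (verts_finite G).exists_notMem
      obtain ⟨D, hD, hlt⟩ := exists_coverCost_splitB_lt hG hC hb hb' hS hT hbS hbT hST
      exact .inr ⟨_, _, D, opStep_splitB _ hG hb hb' (Set.sdiff_union_inter _ _), hD, hlt⟩
  · obtain ⟨op, hstep⟩ := exists_opStep_toggle false true hab.1 hab.2.2.2.1
    exact .inr ⟨op, toggle G a b, C, hstep, isAPartCover_toggle.2 hC, hC.coverCost_toggle_lt hG hab⟩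

theorem IsAPartCover.exists_solves (hG : Bipartite G) (hC : IsAPartCover G C) :
    ∃ L, L.length ≤ coverCost G C ∧ Solves false true L G := by
  induction hn : coverCost G C using Nat.strong_induction_on generalizing G C with
  | _ n ih =>
    rcases hC.isBicliqueUnion_or_exists_opStep hG with hbi | ⟨op, G', D, hstep, hD, hlt⟩
    · exact ⟨[], Nat.zero_le n, G, rfl, hbi⟩
    · obtain ⟨L, hL, H, hseq, hH⟩ := ih _ (hn ▸ hlt) (hstep.bipartite hG) hD rfl
      exact ⟨op :: L, hL.trans_lt (hn ▸ hlt), H, ⟨G', hstep, hseq⟩, hH⟩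

end Sequences

/-- A bipartite graph `G = (A, B, E)` has an `A`-partitioning
cover of cost at most `k` iff `G` can be transformed into a disjoint union of
bicliques by at most `k` edge editions and vertex splittings, with splittings
applied only to vertices of `B` (and their copies). -/
theorem cover_equivalence (G : BGraph) (hbip : Bipartite G) (k : ℕ) :
    (∃ C, IsAPartCover G C ∧ coverCost G C ≤ k) ↔
    (∃ L, L.length ≤ k ∧ Solves false true L G) := by
  refine ⟨fun ⟨C, hC, hcost⟩ => ?_, fun ⟨L, hL, h⟩ => ?_⟩
  · obtain ⟨L, hL, h⟩ := hC.exists_solves hbip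
    exact ⟨L, hL.trans hcost, h⟩
  · obtain ⟨C, hC, hcost⟩ := h.exists_coverCost_le_length hbip
    exact ⟨C, hC, hcost.trans hL⟩

end BCE
end

section
/- Let φ be a 3-CNF formula with M clauses in which every clause contains three distinct variables, every variable occurs at most four times, and whenever a variable occurs exactly twice positively and twice negatively its list of occurrences alternates (positive in its first and third clauses, negative in its second and fourth). Let G_φ be the graph of the construction and let OPT(φ) be the maximum number of clauses of φ simultaneously satisfiable by a truth assignment. Then bcevs(G_φ) ≤ 9M − OPT(φ), i.e., there is a sequence of at most 8M + (M − OPT(φ)) edge editions and vertex splittings transforming G_φ into a disjoint union of bicliques. -/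
namespace BCE

/-- A 3-CNF formula with `m` clauses, each clause `c < m` consisting of three
literals `lit c 0, lit c 1, lit c 2` (a literal is a variable together with a
polarity), the three variables of a clause being pairwise distinct. -/
structure CNF3 where
  m : ℕ
  lit : ℕ → Fin 3 → ℕ × Bool
  distinct : ∀ c, c < m → ∀ i j : Fin 3, (lit c i).1 = (lit c j).1 → i = j

/-- The variable `v` occurs in clause `c`. -/
def OccIn (F : CNF3) (v c : ℕ) : Prop := ∃ i : Fin 3, (F.lit c i).1 = v

/-- The variable `v` occurs positively in clause `c`. -/
def PosIn (F : CNF3) (v c : ℕ) : Prop := ∃ i : Fin 3, F.lit c i = (v, true)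

open Classical in
/-- `d(v)`: the number of clauses in which the variable `v` occurs. -/
noncomputable def occCount (F : CNF3) (v : ℕ) : ℕ :=
  ((Finset.range F.m).filter (fun c => OccIn F v c)).card

open Classical in
/-- The (0-based) position of clause `c` in the list of clauses in which `v`
occurs (ordered by clause index). -/
noncomputable def occIndex (F : CNF3) (v c : ℕ) : ℕ :=
  ((Finset.range c).filter (fun c' => OccIn F v c')).card

open Classical in
/-- The (1-based) index on the cycle of `v` of the vertex `v_c` attached to
clause `c`: `6(j-1)+1` for a positive occurrence and `6(j-1)+3` for a
negative one, `j` being the 1-based occurrence index. -/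
noncomputable def attachIdx (F : CNF3) (v c : ℕ) : ℕ :=
  if PosIn F v c then 6 * occIndex F v c + 1 else 6 * occIndex F v c + 3

/-- Encoding into `ℕ` of the cycle vertex `v_i` (1-based index `i`). -/
def cycVert (v i : ℕ) : ℕ := 2 * Nat.pair v i + 1

/-- Encoding into `ℕ` of the clause vertex of clause `c`. -/
def clVert (c : ℕ) : ℕ := 2 * c

/-- The vertex set of the construction `G_F`: one vertex per clause, and the
cycle vertices `v_1, …, v_{6 d(v)}` for every variable `v`. -/
def VsetF (F : CNF3) : Set ℕ :=
  {x | ∃ c < F.m, x = clVert c} ∪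
  {x | ∃ v i, 1 ≤ i ∧ i ≤ 6 * occCount F v ∧ x = cycVert v i}

/-- The side `A` of `G_F`: the cycle vertices of even index. -/
def AsetF (F : CNF3) : Set ℕ :=
  {x | ∃ v i, 1 ≤ i ∧ i ≤ 6 * occCount F v ∧ i % 2 = 0 ∧ x = cycVert v i}

/-- The side `B` of `G_F`: the cycle vertices of odd index together with the
clause vertices. -/
def BsetF (F : CNF3) : Set ℕ :=
  {x | ∃ c < F.m, x = clVert c} ∪
  {x | ∃ v i, 1 ≤ i ∧ i ≤ 6 * occCount F v ∧ i % 2 = 1 ∧ x = cycVert v i}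

/-- Oriented edges of `G_F`: consecutive cycle edges (cyclically), and the
edge from each clause vertex `c` to `v_c` for every variable `v` of `c`. -/
def AdjF0 (F : CNF3) (x y : ℕ) : Prop :=
  (∃ v i, 1 ≤ i ∧ i ≤ 6 * occCount F v ∧
    x = cycVert v i ∧ y = cycVert v (i % (6 * occCount F v) + 1)) ∨
  (∃ c < F.m, ∃ v, OccIn F v c ∧ x = clVert c ∧ y = cycVert v (attachIdx F v c))

/-- The adjacency relation of the construction `G_F`. -/
def AdjF (F : CNF3) (x y : ℕ) : Prop := AdjF0 F x y ∨ AdjF0 F y x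

/-- `G` is (an encoded copy of) the graph `G_F` of the construction, with the
bipartition `(A, B)` where `A` consists of the cycle vertices with even index
and `B` of the cycle vertices with odd index together with the clause
vertices. -/
def IsGF (F : CNF3) (G : BGraph) : Prop :=
  G.A = AsetF F ∧ G.B = BsetF F ∧ ∀ x y, G.Adj x y ↔ AdjF F x y

/-- `F` is satisfiable. -/
def Satisfiable (F : CNF3) : Prop :=
  ∃ σ : ℕ → Bool, ∀ c < F.m, ∃ i : Fin 3, σ (F.lit c i).1 = (F.lit c i).2

open Classical in
/-- The number of clauses of `F` satisfied by the assignment `σ`. -/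
noncomputable def satCount (F : CNF3) (σ : ℕ → Bool) : ℕ :=
  ((Finset.range F.m).filter
    (fun c => ∃ i : Fin 3, σ (F.lit c i).1 = (F.lit c i).2)).card

/-- `OPT(F)`: the maximum number of clauses of `F` simultaneously satisfiable
by a truth assignment. -/
noncomputable def maxSat (F : CNF3) : ℕ :=
  sSup {t | ∃ σ : ℕ → Bool, t = satCount F σ}

open Classical in
/-- The number of clauses in which `v` occurs positively. -/
noncomputable def posCount (F : CNF3) (v : ℕ) : ℕ :=
  ((Finset.range F.m).filter (fun c => PosIn F v c)).card

/-- Whenever a variable occurs exactly twice positively and twice negatively,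
its occurrence list alternates: positive occurrences are exactly those with
even (0-based) occurrence index. -/
def Alternating (F : CNF3) : Prop :=
  ∀ v, posCount F v = 2 → occCount F v = 4 →
    ∀ c < F.m, OccIn F v c → (PosIn F v c ↔ occIndex F v c % 2 = 0)

end BCE

namespace BCE

/-!
Only edge deletions are needed. Fix an assignment `σ`. On the cycle of `v` take the vertices whose
index is congruent to `1` (if `v` is true) or `0` (if `v` is false) modulo `3` as centres, and cut
the cycle, whose length is a multiple of `3`, into paths of three vertices around them; this costs
`2 d(v)` deletions, which sum to `6M`. The cycle vertex attached to a clause `c` has index `1` or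
`3` modulo `6` according to the polarity of the literal, so it is a centre exactly when its literal
is true. Hence each clause vertex may stay adjacent to the vertex of one true literal, and the
remaining graph is a union of stars. A satisfied clause loses two of its three edges, an
unsatisfied one all three.
-/

/-- The graph `G` with all edges in `S` removed; pairs in `S` that are not edges are ignored. -/
def deleteEdges (G : BGraph) (S : Finset (Sym2 ℕ)) : BGraph where
  A := G.A
  B := G.B
  finA := G.finA
  finB := G.finB
  Adj x y := G.Adj x y ∧ s(x, y) ∉ S
  symm x y h := ⟨G.symm x y h.1, Sym2.eq_swap (a := x) ▸ h.2⟩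

lemma deleteEdges_eq_self {G : BGraph} {S : Finset (Sym2 ℕ)}
    (h : ∀ x y, G.Adj x y → s(x, y) ∉ S) : deleteEdges G S = G := by
  have hadj : (fun x y => G.Adj x y ∧ s(x, y) ∉ S) = G.Adj :=
    funext₂ fun x y => propext (and_iff_left_of_imp (h x y))
  simp only [deleteEdges, hadj]

lemma deleteEdges_insert (G : BGraph) (e : Sym2 ℕ) (S : Finset (Sym2 ℕ)) :
    deleteEdges G (insert e S) = deleteEdges (deleteEdges G {e}) S := by
  simp only [deleteEdges, Finset.mem_insert, Finset.mem_singleton, not_or, and_assoc]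

lemma deleteEdges_singleton_of_not_adj {G : BGraph} {u v : ℕ} (h : ¬ G.Adj u v) :
    deleteEdges G {s(u, v)} = G := by
  refine deleteEdges_eq_self fun x y hxy hmem => ?_
  rcases Sym2.eq_iff.mp (Finset.mem_singleton.mp hmem) with ⟨rfl, rfl⟩ | ⟨rfl, rfl⟩
  exacts [h hxy, h (G.symm _ _ hxy)]

lemma opStep_deleteEdges_singleton (sA sB : Bool) {G : BGraph} {u v : ℕ} (h : G.Adj u v) :
    OpStep sA sB (Op.del u v) G (deleteEdges G {s(u, v)}) :=
  OpStep.del h rfl rfl fun x y => by simp only [deleteEdges, Finset.mem_singleton, Sym2.eq_iff]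

lemma exists_applySeq_deleteEdges (sA sB : Bool) (G : BGraph) (S : Finset (Sym2 ℕ)) :
    ∃ L, L.length ≤ S.card ∧ ApplySeq sA sB L G (deleteEdges G S) := by
  induction S using Finset.induction_on generalizing G with
  | empty => exact ⟨[], le_rfl, deleteEdges_eq_self fun _ _ _ => Finset.notMem_empty _⟩
  | insert e S he ih =>
    induction e using Sym2.ind with | _ u v
    rw [Finset.card_insert_of_notMem he, deleteEdges_insert]
    obtain ⟨L, hlen, hseq⟩ := ih (deleteEdges G {s(u, v)})
    by_cases huv : G.Adj u v
    · exact ⟨Op.del u v :: L, Nat.succ_le_succ hlen, _,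
        opStep_deleteEdges_singleton sA sB huv, hseq⟩
    · rw [deleteEdges_singleton_of_not_adj huv] at hseq ⊢
      exact ⟨L, hlen.trans (Nat.le_succ _), hseq⟩

/-- The pair `x, y` joins the centre of a star to a vertex of that star, where `p` maps every
vertex to the centre of its star. -/
def IsStarEdge {α : Type*} (p : α → α) (x y : α) : Prop := p x = p y ∧ (p x = x ∨ p y = y)

lemma IsStarEdge.symm {α : Type*} {p : α → α} {x y : α} (h : IsStarEdge p x y) :
    IsStarEdge p y x :=
  ⟨h.1.symm, h.2.symm⟩

lemma IsStarEdge.map {α β : Type*} {p : α → α} {q : β → β} {f : α → β}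
    (hf : Function.Semiconj f p q) {x y : α} (h : IsStarEdge p x y) :
    IsStarEdge q (f x) (f y) := by
  unfold IsStarEdge
  rw [← hf, ← hf]
  exact ⟨congrArg f h.1, h.2.imp (congrArg f) (congrArg f)⟩

lemma isBicliqueUnion_of_isStarEdge {G : BGraph} {p : ℕ → ℕ} (hloop : ∀ x, ¬ G.Adj x x)
    (hp : ∀ x y, G.Adj x y → IsStarEdge p x y) : IsBicliqueUnion G := by
  intro a b c d hab hbc hcd
  have ne_of_adj : ∀ {x y}, G.Adj x y → x ≠ y := fun h hxy => hloop _ (hxy ▸ h)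
  obtain ⟨pab, fab⟩ := hp a b hab
  obtain ⟨pbc, fbc⟩ := hp b c hbc
  obtain ⟨pcd, fcd⟩ := hp c d hcd
  -- If `b` is the centre, then `c` is a leaf and so `d = b`; if `c` is the centre, then `a = c`.
  rcases fbc with hb | hc
  · have hd : d = b := by
      rcases fcd with hc | hd
      · exact absurd (by rw [← hb, pbc, hc]) (ne_of_adj hbc)
      · rw [← hd, ← pcd, ← pbc, hb]
    exact hd ▸ hab
  · have ha : a = c := by
      rcases fab with ha | hb
      · rw [← ha, pab, pbc, hc]
      · exact absurd (by rw [← hb, pbc, hc]) (ne_of_adj hbc)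
    exact ha ▸ hcd

/-- On the cycle with vertices `1, …, n`, where `3 ∣ n`, the vertex congruent to `r` modulo `3`
among `i` and its two neighbours. -/
def nearestCentre (r n i : ℕ) : ℕ :=
  if i ≡ r [MOD 3] then i
  else if i + 1 ≡ r [MOD 3] then i % n + 1
  else if i = 1 then n else i - 1

lemma nearestCentre_of_modEq {r i : ℕ} (n : ℕ) (h : i ≡ r [MOD 3]) : nearestCentre r n i = i :=
  if_pos h

lemma nearestCentre_of_succ_modEq {r i : ℕ} (n : ℕ) (h : i + 1 ≡ r [MOD 3]) :
    nearestCentre r n i = i % n + 1 := by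
  have hi : ¬ i ≡ r [MOD 3] := by unfold Nat.ModEq at *; omega
  rw [nearestCentre, if_neg hi, if_pos h]

lemma cycle_succ_modEq {n : ℕ} (hn : 3 ∣ n) (i : ℕ) : i % n + 1 ≡ i + 1 [MOD 3] :=
  Nat.ModEq.add_right 1 (Nat.mod_mod_of_dvd i hn)

lemma nearestCentre_cycle_succ {r n i : ℕ} (hn : 3 ∣ n) (h1 : 1 ≤ i) (hin : i ≤ n)
    (h : i ≡ r [MOD 3]) : nearestCentre r n (i % n + 1) = i := by
  have hsucc := cycle_succ_modEq hn i
  have h0 : ¬ i % n + 1 ≡ r [MOD 3] := by unfold Nat.ModEq at *; omega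
  have h2 : ¬ i % n + 1 + 1 ≡ r [MOD 3] := by unfold Nat.ModEq at *; omega
  rw [nearestCentre, if_neg h0, if_neg h2]
  rcases hin.lt_or_eq with hlt | rfl
  · rw [Nat.mod_eq_of_lt hlt, if_neg (by omega), Nat.add_sub_cancel]
  · rw [Nat.mod_self, if_pos rfl]

lemma isStarEdge_nearestCentre {r n i : ℕ} (hn : 3 ∣ n) (h1 : 1 ≤ i) (hin : i ≤ n)
    (hcut : ¬ i ≡ r + 1 [MOD 3]) : IsStarEdge (nearestCentre r n) i (i % n + 1) := by
  by_cases hi : i ≡ r [MOD 3]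
  · have hfix := nearestCentre_of_modEq n hi
    exact ⟨hfix.trans (nearestCentre_cycle_succ hn h1 hin hi).symm, Or.inl hfix⟩
  · have hi' : i + 1 ≡ r [MOD 3] := by unfold Nat.ModEq at *; omega
    have hfix := nearestCentre_of_modEq n ((cycle_succ_modEq hn i).trans hi')
    exact ⟨(nearestCentre_of_succ_modEq n hi').trans hfix.symm, Or.inr hfix⟩

lemma cycVert_inj {v i w j : ℕ} : cycVert v i = cycVert w j ↔ v = w ∧ i = j := by
  rw [← Nat.pair_eq_pair]
  unfold cycVert
  omega

lemma clVert_ne_cycVert (c v i : ℕ) : clVert c ≠ cycVert v i := by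
  unfold cycVert clVert
  omega

lemma not_adjF_self (F : CNF3) (x : ℕ) : ¬ AdjF F x x := by
  suffices ¬ AdjF0 F x x from fun h => this (or_self_iff.mp h)
  rintro (⟨v, i, -, -, rfl, h⟩ | ⟨c, -, v, -, rfl, h⟩)
  · have hmod : i % (6 * occCount F v) + 1 ≡ i + 1 [MOD 3] := cycle_succ_modEq (by omega) i
    rw [← (cycVert_inj.mp h).2] at hmod
    unfold Nat.ModEq at hmod
    omega
  · exact clVert_ne_cycVert _ _ _ h

section Assignment

variable (F : CNF3) (σ : ℕ → Bool)

/-- The cycle vertex to which the clause vertex of `c` is joined on account of its `k`-th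
literal. -/
noncomputable def litVert (c : ℕ) (k : Fin 3) : ℕ :=
  cycVert (F.lit c k).1 (attachIdx F (F.lit c k).1 c)

/-- The first literal of the clause `c` made true by `σ`, if there is one. -/
def trueLit (c : ℕ) : Option (Fin 3) :=
  Fin.find? fun k => σ (F.lit c k).1 == (F.lit c k).2

/-- The map sending every vertex of the construction to the centre of its star. Even numbers encode
clause vertices and odd ones cycle vertices; the residue modulo `3` of the centres on the cycle of
`v` is `1` if `v` is true and `0` if it is false. -/
noncomputable def starCentre (x : ℕ) : ℕ :=
  if Even x then (trueLit F σ (x / 2)).elim x (litVert F (x / 2))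
  else
    let v := (x / 2).unpair.1
    cycVert v (nearestCentre (σ v).toNat (6 * occCount F v) (x / 2).unpair.2)

/-- The cycle edges at `v` that join two different stars: those from an index congruent to the
residue of the centres plus one to the next index. -/
noncomputable def cycleCut (v : ℕ) : Finset (Sym2 ℕ) :=
  (Finset.range (2 * occCount F v)).image fun k =>
    s(cycVert v (3 * k + (σ v).toNat + 1), cycVert v (3 * k + (σ v).toNat + 2))

/-- The edges at the clause vertex of `c` other than the one to its chosen true literal. -/
noncomputable def clauseCut (c : ℕ) : Finset (Sym2 ℕ) :=
  (trueLit F σ c).toFinsetᶜ.image fun k => s(clVert c, litVert F c k)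

/-- The variables of the formula. -/
def vars : Finset ℕ :=
  (Finset.range F.m ×ˢ Finset.univ).image fun q : ℕ × Fin 3 => (F.lit q.1 q.2).1

/-- All edges of the construction that join two different stars. -/
noncomputable def starCut : Finset (Sym2 ℕ) :=
  (vars F).biUnion (cycleCut F σ) ∪ (Finset.range F.m).biUnion (clauseCut F σ)

variable {F}

lemma mem_vars {v : ℕ} : v ∈ vars F ↔ ∃ c < F.m, OccIn F v c := by
  simp [vars, OccIn]

lemma mem_vars_of_occCount_pos {v : ℕ} (h : 0 < occCount F v) : v ∈ vars F := by
  obtain ⟨c, hc⟩ := Finset.card_pos.mp h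
  exact mem_vars.mpr ⟨c, by simpa only [Finset.mem_filter, Finset.mem_range] using hc⟩

open Classical in
lemma card_filter_occIn {c : ℕ} (hc : c < F.m) : ((vars F).filter (OccIn F · c)).card = 3 := by
  have himage : (vars F).filter (OccIn F · c) = Finset.univ.image fun k => (F.lit c k).1 := by
    ext v
    simp only [Finset.mem_filter, Finset.mem_image, Finset.mem_univ, true_and]
    exact and_iff_right_of_imp fun hv => mem_vars.mpr ⟨c, hc, hv⟩
  rw [himage, Finset.card_image_of_injective _ fun i j => F.distinct c hc i j, Finset.card_fin]

variable (F)

lemma sum_occCount : ∑ v ∈ vars F, occCount F v = 3 * F.m := by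
  classical
  calc ∑ v ∈ vars F, occCount F v
      = ∑ c ∈ Finset.range F.m, ((vars F).filter (OccIn F · c)).card := by
        simpa only [occCount, Finset.bipartiteAbove, Finset.bipartiteBelow] using
          Finset.sum_card_bipartiteAbove_eq_sum_card_bipartiteBelow (OccIn F)
            (s := vars F) (t := Finset.range F.m)
    _ = 3 * F.m := by
        rw [Finset.sum_const_nat fun c hc => card_filter_occIn (Finset.mem_range.mp hc),
          Finset.card_range, mul_comm]

lemma card_cycleCut_le (v : ℕ) : (cycleCut F σ v).card ≤ 2 * occCount F v :=
  Finset.card_image_le.trans (Finset.card_range _).le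

lemma card_clauseCut_add_le (c : ℕ) :
    (clauseCut F σ c).card + (trueLit F σ c).toFinset.card ≤ 3 := by
  calc (clauseCut F σ c).card + (trueLit F σ c).toFinset.card
      ≤ (trueLit F σ c).toFinsetᶜ.card + (trueLit F σ c).toFinset.card :=
        Nat.add_le_add_right Finset.card_image_le _
    _ = 3 := by rw [Finset.card_compl_add_card, Fintype.card_fin]

lemma satCount_eq_sum_card_trueLit :
    satCount F σ = ∑ c ∈ Finset.range F.m, (trueLit F σ c).toFinset.card := by
  classical
  rw [satCount, Finset.card_filter]
  refine Finset.sum_congr rfl fun c _ => ?_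
  have hsat : (∃ k : Fin 3, σ (F.lit c k).1 = (F.lit c k).2) ↔ (trueLit F σ c).isSome := by
    simp [trueLit]
  simp only [hsat]
  cases trueLit F σ c <;> rfl

lemma card_starCut_add_satCount_le : (starCut F σ).card + satCount F σ ≤ 9 * F.m := by
  have hcycle : ((vars F).biUnion (cycleCut F σ)).card ≤ 6 * F.m :=
    calc ((vars F).biUnion (cycleCut F σ)).card
        ≤ ∑ v ∈ vars F, 2 * occCount F v :=
          Finset.card_biUnion_le.trans (Finset.sum_le_sum fun v _ => card_cycleCut_le F σ v)
      _ = 6 * F.m := by rw [← Finset.mul_sum, sum_occCount]; ring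
  have hclause : ((Finset.range F.m).biUnion (clauseCut F σ)).card + satCount F σ ≤ 3 * F.m :=
    calc ((Finset.range F.m).biUnion (clauseCut F σ)).card + satCount F σ
        ≤ ∑ c ∈ Finset.range F.m, ((clauseCut F σ c).card + (trueLit F σ c).toFinset.card) := by
          rw [satCount_eq_sum_card_trueLit, Finset.sum_add_distrib]
          exact Nat.add_le_add_right Finset.card_biUnion_le _
      _ ≤ ∑ c ∈ Finset.range F.m, 3 := Finset.sum_le_sum fun c _ => card_clauseCut_add_le F σ c
      _ = 3 * F.m := by rw [Finset.sum_const, Finset.card_range, smul_eq_mul, mul_comm]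
  have hunion := Finset.card_union_le ((vars F).biUnion (cycleCut F σ))
    ((Finset.range F.m).biUnion (clauseCut F σ))
  rw [starCut]
  omega

variable {F σ}

lemma eq_of_trueLit_eq_some {c : ℕ} {k : Fin 3} (h : trueLit F σ c = some k) :
    σ (F.lit c k).1 = (F.lit c k).2 :=
  beq_iff_eq.mp (Fin.eq_true_of_find?_eq_some h)

lemma posIn_lit_iff {c : ℕ} (hc : c < F.m) (k : Fin 3) :
    PosIn F (F.lit c k).1 c ↔ (F.lit c k).2 = true := by
  constructor
  · rintro ⟨i, hi⟩
    obtain rfl := F.distinct c hc i k (by rw [hi])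
    rw [hi]
  · exact fun h => ⟨k, Prod.ext rfl h⟩

lemma attachIdx_lit_modEq {c : ℕ} (hc : c < F.m) (k : Fin 3) :
    attachIdx F (F.lit c k).1 c ≡ (F.lit c k).2.toNat [MOD 3] := by
  unfold attachIdx Nat.ModEq
  rw [posIn_lit_iff hc]
  cases (F.lit c k).2
  · simp only [Bool.false_eq_true, if_false, Bool.toNat_false]
    omega
  · simp only [if_true, Bool.toNat_true]
    omega

variable (F σ) in
lemma semiconj_cycVert_starCentre (v : ℕ) :
    Function.Semiconj (cycVert v) (nearestCentre (σ v).toNat (6 * occCount F v))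
      (starCentre F σ) := by
  intro i
  have hodd : ¬ Even (cycVert v i) := Nat.not_even_two_mul_add_one _
  have hhalf : cycVert v i / 2 = Nat.pair v i := by unfold cycVert; omega
  simp only [starCentre, if_neg hodd, hhalf, Nat.unpair_pair]

lemma starCentre_clVert {c : ℕ} {k : Fin 3} (h : trueLit F σ c = some k) :
    starCentre F σ (clVert c) = litVert F c k := by
  simp [starCentre, clVert, h]

lemma starCentre_litVert {c : ℕ} (hc : c < F.m) {k : Fin 3} (h : trueLit F σ c = some k) :
    starCentre F σ (litVert F c k) = litVert F c k := by
  rw [litVert, ← semiconj_cycVert_starCentre, eq_of_trueLit_eq_some h,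
    nearestCentre_of_modEq _ (attachIdx_lit_modEq hc k)]

lemma isStarEdge_or_mem_cycleCut {v i : ℕ} (h1 : 1 ≤ i) (hi : i ≤ 6 * occCount F v) :
    IsStarEdge (starCentre F σ) (cycVert v i) (cycVert v (i % (6 * occCount F v) + 1)) ∨
      s(cycVert v i, cycVert v (i % (6 * occCount F v) + 1)) ∈ cycleCut F σ v := by
  by_cases hcut : i ≡ (σ v).toNat + 1 [MOD 3]
  · right
    have hr := Bool.toNat_le (σ v)
    unfold Nat.ModEq at hcut
    have hi' : i = 3 * (i / 3) + (σ v).toNat + 1 := by omega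
    rw [Nat.mod_eq_of_lt (by omega)]
    refine Finset.mem_image.mpr ⟨i / 3, Finset.mem_range.mpr (by omega), ?_⟩
    rw [← hi', show 3 * (i / 3) + (σ v).toNat + 2 = i + 1 by omega]
  · left
    exact (isStarEdge_nearestCentre (by omega) h1 hi hcut).map (semiconj_cycVert_starCentre F σ v)

lemma isStarEdge_or_mem_clauseCut {c : ℕ} (hc : c < F.m) (k : Fin 3) :
    IsStarEdge (starCentre F σ) (clVert c) (litVert F c k) ∨
      s(clVert c, litVert F c k) ∈ clauseCut F σ c := by
  by_cases hk : trueLit F σ c = some k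
  · have hfix := starCentre_litVert hc hk
    exact Or.inl ⟨(starCentre_clVert hk).trans hfix.symm, Or.inr hfix⟩
  · refine Or.inr (Finset.mem_image_of_mem _ ?_)
    rwa [Finset.mem_compl, Option.mem_toFinset]

lemma AdjF0.isStarEdge_or_mem_starCut {x y : ℕ} (h : AdjF0 F x y) :
    IsStarEdge (starCentre F σ) x y ∨ s(x, y) ∈ starCut F σ := by
  rcases h with ⟨v, i, h1, hi, rfl, rfl⟩ | ⟨c, hc, _, ⟨k, rfl⟩, rfl, rfl⟩
  · have hv : v ∈ vars F := mem_vars_of_occCount_pos (by omega)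
    exact (isStarEdge_or_mem_cycleCut h1 hi).imp_right fun hcut =>
      Finset.mem_union_left _ (Finset.mem_biUnion.mpr ⟨v, hv, hcut⟩)
  · exact (isStarEdge_or_mem_clauseCut hc k).imp_right fun hcut =>
      Finset.mem_union_right _ (Finset.mem_biUnion.mpr ⟨c, Finset.mem_range.mpr hc, hcut⟩)

lemma AdjF.isStarEdge_of_notMem_starCut {x y : ℕ} (h : AdjF F x y) (hcut : s(x, y) ∉ starCut F σ) :
    IsStarEdge (starCentre F σ) x y := by
  rcases h with h | h
  · exact h.isStarEdge_or_mem_starCut.resolve_right hcut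
  · exact (h.isStarEdge_or_mem_starCut.resolve_right (Sym2.eq_swap (a := x) ▸ hcut)).symm

lemma isBicliqueUnion_deleteEdges_starCut {G : BGraph} (hG : IsGF F G) :
    IsBicliqueUnion (deleteEdges G (starCut F σ)) := by
  obtain ⟨-, -, hadj⟩ := hG
  refine isBicliqueUnion_of_isStarEdge (p := starCentre F σ) ?_ ?_
  · exact fun x hx => not_adjF_self F x ((hadj x x).mp hx.1)
  · exact fun x y hxy => ((hadj x y).mp hxy.1).isStarEdge_of_notMem_starCut hxy.2

end Assignment

lemma exists_satCount_eq_maxSat (F : CNF3) : ∃ σ, maxSat F = satCount F σ := by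
  refine Nat.sSup_mem (s := {t | ∃ σ, t = satCount F σ})
    ⟨satCount F fun _ => true, _, rfl⟩ ⟨F.m, ?_⟩
  rintro _ ⟨σ, rfl⟩
  exact (Finset.card_filter_le _ _).trans (Finset.card_range _).le

theorem construction_upper_bound_general (sA sB : Bool) (F : CNF3) (G : BGraph) (hG : IsGF F G) :
    ∃ L, L.length ≤ 8 * F.m + (F.m - maxSat F) ∧ Solves sA sB L G := by
  obtain ⟨σ, hσ⟩ := exists_satCount_eq_maxSat F
  obtain ⟨L, hlen, hseq⟩ := exists_applySeq_deleteEdges sA sB G (starCut F σ)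
  have hcard := card_starCut_add_satCount_le F σ
  exact ⟨L, by omega, _, hseq, isBicliqueUnion_deleteEdges_starCut hG⟩

/-- Let `φ` be a 3-CNF formula with `M` clauses (three distinct
variables per clause), each variable occurring at most four times, with the
alternation condition on variables occurring twice positively and twice
negatively.  Then the constructed graph `G_φ` can be transformed into a
disjoint union of bicliques by a sequence of at most
`8M + (M - OPT(φ)) = 9M - OPT(φ)` edge editions and vertex splittings. -/
theorem construction_upper_bound (F : CNF3) (G : BGraph) (hG : IsGF F G)
    (h4 : ∀ v, occCount F v ≤ 4) (halt : Alternating F) :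
    ∃ L, L.length ≤ 8 * F.m + (F.m - maxSat F) ∧ Solves true true L G :=
  construction_upper_bound_general true true F G hG

end BCE
end
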